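/- Define the real polynomials f₃(q) = q^28+5q^26+2q^24-9q^22-8q^20-3q^18+19q^16+28q^14+19q^12-3q^10-8q^8-9q^6+2q^4+5q^2+1 and f₄(q) = 2q^27+4q^25-3q^23-7q^21-4q^19+4q^17+19q^15+19q^13+4q^11-4q^9-7q^7-3q^5+4q^3+2q. Then for every real number q ≥ √2, both f₃(q) + √2·f₄(q) > 0 and f₃(q) - √2·f₄(q) > 0. -/

import Mathlib

noncomputable def f₃ (q : ℝ) : ℝ :=
  q^28 + 5*q^26 + 2*q^24 - 9*q^22 - 8*q^20 - 3*q^18 + 19*q^16 + 28*q^14 + 19*q^12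
    - 3*q^10 - 8*q^8 - 9*q^6 + 2*q^4 + 5*q^2 + 1

noncomputable def f₄ (q : ℝ) : ℝ :=
  2*q^27 + 4*q^25 - 3*q^23 - 7*q^21 - 4*q^19 + 4*q^17 + 19*q^15 + 19*q^13 + 4*q^11
    - 4*q^9 - 7*q^7 - 3*q^5 + 4*q^3 + 2*q

/-!
Both `f₃` and `f₄` are palindromic about degree 14, `f₃` being even and `f₄` odd. So for `s = ±√2`
the quotient `(f₃ q - s * f₄ q) / q ^ 14` is a polynomial in `y = q + q⁻¹`, and it splits as
`(y - s) * (y ^ 2 - s * y - 1) * (y * a (y ^ 2) + s * b (y ^ 2))`; the first two factors come from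
divisors over `ℚ(√2)` of the cyclotomic polynomials `Φ₈` and `Φ₂₄`. If `9 / 2 ≤ y ^ 2`, which
`√2 ≤ q` guarantees, then the terms odd in `y` dominate both in the product of the first two factors
and in the last one, so these have the sign of `y`.
-/

theorem sub_mul_add_pos_of_sq_lt_sq {R : Type*} [CommRing R] [LinearOrder R] [IsStrictOrderedRing R]
    {a b c d : R} (hac : 0 < a * c) (hba : b ^ 2 < a ^ 2) (hdc : d ^ 2 < c ^ 2) :
    0 < (a - b) * (c + d) := by
  rw [sq_lt_sq] at hba hdc
  rcases pos_and_pos_or_neg_and_neg_of_mul_pos hac with ⟨ha, hc⟩ | ⟨ha, hc⟩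
  · rw [abs_of_pos ha] at hba
    rw [abs_of_pos hc] at hdc
    exact mul_pos (by linarith [le_abs_self b]) (by linarith [neg_abs_le d])
  · rw [abs_of_neg ha] at hba
    rw [abs_of_neg hc] at hdc
    exact mul_pos_of_neg_of_neg (by linarith [neg_abs_le b]) (by linarith [le_abs_self d])

/-- The polynomial `a` for which `y * a (y ^ 2)` is the part odd in `y = q + q⁻¹` of the
noncyclotomic factor of `(f₃ q - s * f₄ q) / q ^ 14`, where `s = ±√2`. -/
def cofactorOdd (x : ℝ) : ℝ :=
  (x - 1) * (x - 2) * (x - 4) * (x ^ 2 - 3 * x - 2)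

/-- The polynomial `b` for which `s * b (y ^ 2)` is the part even in `y = q + q⁻¹` of the
noncyclotomic factor of `(f₃ q - s * f₄ q) / q ^ 14`, where `s = ±√2`. -/
def cofactorEven (x : ℝ) : ℝ :=
  x ^ 4 - 8 * x ^ 3 + 19 * x ^ 2 - 11 * x - 7

section Factorization

variable {q s y : ℝ}

theorem f₃_eq_pow_mul (hq : q ≠ 0) (hy : y = q + q⁻¹) :
    f₃ q = q ^ 14 * (y ^ 2 * (y ^ 2 + 1) * cofactorOdd (y ^ 2)
      - 2 * (2 * y ^ 2 - 1) * cofactorEven (y ^ 2)) := by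
  subst hy
  simp only [f₃, cofactorOdd, cofactorEven]
  field_simp
  ring

theorem f₄_eq_pow_mul (hq : q ≠ 0) (hy : y = q + q⁻¹) :
    f₄ q = q ^ 14 * (y * ((2 * y ^ 2 - 1) * cofactorOdd (y ^ 2)
      - (y ^ 2 + 1) * cofactorEven (y ^ 2))) := by
  subst hy
  simp only [f₄, cofactorOdd, cofactorEven]
  field_simp
  ring

theorem cyclotomicFactor_eq (hs : s ^ 2 = 2) :
    (y - s) * (y ^ 2 - s * y - 1) = y * (y ^ 2 + 1) - s * (2 * y ^ 2 - 1) := by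
  linear_combination y * hs

theorem f₃_sub_mul_f₄_eq (hq : q ≠ 0) (hs : s ^ 2 = 2) (hy : y = q + q⁻¹) :
    f₃ q - s * f₄ q = q ^ 14 * ((y - s) * (y ^ 2 - s * y - 1)
      * (y * cofactorOdd (y ^ 2) + s * cofactorEven (y ^ 2))) := by
  rw [cyclotomicFactor_eq hs, f₃_eq_pow_mul hq hy, f₄_eq_pow_mul hq hy]
  linear_combination q ^ 14 * (2 * y ^ 2 - 1) * cofactorEven (y ^ 2) * hs

end Factorization

section Estimates

variable {x : ℝ}

theorem two_mul_sq_lt_mul_add_one_sq (hx : 4 ≤ x) : 2 * (2 * x - 1) ^ 2 < x * (x + 1) ^ 2 := by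
  have h_diff : x * (x + 1) ^ 2 - 2 * (2 * x - 1) ^ 2 = (x - 2) * (x * (x - 4) + 1) := by ring
  have h_left : 0 < x - 2 := by linarith
  have h_right : 0 < x * (x - 4) + 1 := by nlinarith
  exact sub_pos.mp (h_diff ▸ mul_pos h_left h_right)

theorem cofactorEven_nonneg (hx : 9 / 2 ≤ x) : 0 ≤ cofactorEven x := by
  calc 0 ≤ (x * (x - 4)) ^ 2 + (3 * x ^ 2 - 11 * x - 7) :=
        add_nonneg (sq_nonneg _) (by nlinarith)
    _ = cofactorEven x := by rw [cofactorEven]; ring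

theorem cofactorEven_lt_cofactorOdd (hx : 9 / 2 ≤ x) : cofactorEven x < cofactorOdd x := by
  obtain ⟨r, hr, rfl⟩ := exists_nonneg_add_of_le hx
  rw [← sub_pos]
  simp only [cofactorOdd, cofactorEven]
  -- All coefficients of the difference, expanded around `9 / 2`, are positive.
  ring_nf
  positivity

theorem two_mul_cofactorEven_sq_lt (hx : 9 / 2 ≤ x) :
    2 * cofactorEven x ^ 2 < x * cofactorOdd x ^ 2 := by
  have h_sq : cofactorEven x ^ 2 < cofactorOdd x ^ 2 :=
    pow_lt_pow_left₀ (cofactorEven_lt_cofactorOdd hx) (cofactorEven_nonneg hx) two_ne_zero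
  calc 2 * cofactorEven x ^ 2 < 2 * cofactorOdd x ^ 2 := by gcongr
    _ ≤ x * cofactorOdd x ^ 2 := by gcongr; linarith

end Estimates

theorem cyclotomicFactor_mul_cofactor_pos {s y : ℝ} (hs : s ^ 2 = 2) (hy : 9 / 2 ≤ y ^ 2) :
    0 < (y - s) * (y ^ 2 - s * y - 1)
      * (y * cofactorOdd (y ^ 2) + s * cofactorEven (y ^ 2)) := by
  have h_odd : 0 < cofactorOdd (y ^ 2) :=
    (cofactorEven_nonneg hy).trans_lt (cofactorEven_lt_cofactorOdd hy)
  rw [cyclotomicFactor_eq hs]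
  apply sub_mul_add_pos_of_sq_lt_sq
  · calc 0 < y ^ 2 * (y ^ 2 + 1) * cofactorOdd (y ^ 2) := by positivity
      _ = y * (y ^ 2 + 1) * (y * cofactorOdd (y ^ 2)) := by ring
  · simp only [mul_pow, hs]
    exact two_mul_sq_lt_mul_add_one_sq (by linarith)
  · simp only [mul_pow, hs]
    exact two_mul_cofactorEven_sq_lt hy

theorem f₃_sub_mul_f₄_pos {q s : ℝ} (hs : s ^ 2 = 2) (hq : 9 / 2 ≤ (q + q⁻¹) ^ 2) :
    0 < f₃ q - s * f₄ q := by
  have hq₀ : q ≠ 0 := by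
    rintro rfl
    norm_num at hq
  rw [f₃_sub_mul_f₄_eq hq₀ hs rfl]
  exact mul_pos (Even.pow_pos (by decide) hq₀) (cyclotomicFactor_mul_cofactor_pos hs hq)

theorem nine_halves_le_add_inv_sq {q : ℝ} (hq : √2 ≤ q) : 9 / 2 ≤ (q + q⁻¹) ^ 2 := by
  have hq₀ : 0 < q := (Real.sqrt_pos.mpr two_pos).trans_le hq
  have hq₂ : 2 ≤ q ^ 2 := (Real.sqrt_le_left hq₀.le).mp hq
  have h_diff : (q + q⁻¹) ^ 2 - 9 / 2 = (q ^ 2 - 2) * (2 * q ^ 2 - 1) / (2 * q ^ 2) := by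
    field_simp
    ring
  rw [← sub_nonneg, h_diff]
  exact div_nonneg (mul_nonneg (by linarith) (by linarith)) (by positivity)

theorem f3_f4_pos_general (q : ℝ) (hq : 9 / 2 ≤ (q + q⁻¹) ^ 2) :
    0 < f₃ q + √2 * f₄ q ∧ 0 < f₃ q - √2 * f₄ q := by
  have hs : √2 ^ 2 = (2 : ℝ) := Real.sq_sqrt zero_le_two
  refine ⟨?_, f₃_sub_mul_f₄_pos hs hq⟩
  simpa only [neg_mul, sub_neg_eq_add] using f₃_sub_mul_f₄_pos ((neg_sq √2).trans hs) hq

theorem f3_f4_pos (q : ℝ) (hq : Real.sqrt 2 ≤ q) :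
    0 < f₃ q + Real.sqrt 2 * f₄ q ∧ 0 < f₃ q - Real.sqrt 2 * f₄ q :=
  f3_f4_pos_general q (nine_halves_le_add_inv_sq hq)
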